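/- arXiv:2502.13331 — 2 statements merged into one kernel-verified Lean document; each statement's English description precedes it below -/
import Mathlib

section
/- Let q and q′ be odd prime powers with q ≡ 1 (mod 4) and q′ ≡ 1 (mod 4), let k ≡ 2 (mod 4) with 3 < k, k dividing both q−1 and q′−1, k < q−1, k < q′−1, and suppose e = (q−1)/k and e′ = (q′−1)/k are both even. Let β ∈ F_q and β′ ∈ F_{q′} be primitive k-th roots of unity. If χ_q(1−β^{2j}) = χ_{q′}(1−β′^{2j}) for every j with 1 ≤ 2j ≤ k/2 − 1 and χ_q(2) = χ_{q′}(2), then (q,k) gives a 3-design if and only if (q′,k) gives a 3-design. (Here χ_q and χ_{q′} denote the quadratic residue characters of F_q and F_{q′}.) -/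
/-!
Setting: `F` is a finite field of order `q`. The projective line `PG(1,q)` is
modelled as `Projectivization F (Fin 2 → F)`. Since scalar matrices act trivially
on the projective line, the images of a set under all elements of `SL(2,F)` form
exactly its `PSL(2,F)`-orbit; `mapSL g` is the map of the projective line induced
by `g : SL(2,F)`. For `k ∣ q - 1`, the unique subgroup of order `k` of `Fˣ` is the
set of `k`-th roots of unity `{x : F | x ^ k = 1}`, embedded into the projective
line via `x ↦ [x : 1]`. `(q, k)` gives a 3-design iff there is `lam > 0` such that
every 3-subset of the projective line lies in exactly `lam` blocks of the orbit.
-/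

noncomputable section

open Matrix

/-- The point at infinity `[1 : 0]` of the projective line over `F`. -/
def inftyPt (F : Type) [Field F] : Projectivization F (Fin 2 → F) :=
  Projectivization.mk F ![1, 0] (by
    intro h
    simpa using congrFun h 0)

/-- The embedding of `F` into the projective line, `x ↦ [x : 1]`. -/
def embedPt (F : Type) [Field F] (x : F) : Projectivization F (Fin 2 → F) :=
  Projectivization.mk F ![x, 1] (by
    intro h
    simpa using congrFun h 1)

/-- The action of `g : SL(2,F)` on the projective line (as linear fractional
transformation). -/
def mapSL {F : Type} [Field F] (g : Matrix.SpecialLinearGroup (Fin 2) F) :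
    Projectivization F (Fin 2 → F) → Projectivization F (Fin 2 → F) :=
  Projectivization.map (Matrix.SpecialLinearGroup.toLin' g : (Fin 2 → F) →ₗ[F] (Fin 2 → F))
    (Matrix.SpecialLinearGroup.toLin' g).injective

/-- The starter block: the unique subgroup of order `k` of `Fˣ` (the `k`-th roots
of unity, for `k ∣ q - 1`), regarded as a subset of the projective line. -/
def starterB (F : Type) [Field F] (k : ℕ) : Set (Projectivization F (Fin 2 → F)) :=
  embedPt F '' {x : F | x ^ k = 1}

/-- The `PSL(2,F)`-orbit `GB` of the starter block. -/
def designBlocks (F : Type) [Field F] (k : ℕ) :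
    Set (Set (Projectivization F (Fin 2 → F))) :=
  {S | ∃ g : Matrix.SpecialLinearGroup (Fin 2) F, S = mapSL g '' starterB F k}

/-- `GB` is the block set of a `3-(q+1, k, lam)` design: `lam` is positive and every
3-subset of the projective line is contained in exactly `lam` blocks. -/
def isThreeDesign (F : Type) [Field F] (k lam : ℕ) : Prop :=
  0 < lam ∧
    ∀ T : Finset (Projectivization F (Fin 2 → F)), T.card = 3 →
      {S ∈ designBlocks F k | (T : Set (Projectivization F (Fin 2 → F))) ⊆ S}.ncard = lam

/-- `(q, k)` gives a 3-design. -/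
def gives3Design (F : Type) [Field F] (k : ℕ) : Prop :=
  ∃ lam : ℕ, isThreeDesign F k lam

/-!
Two ordered triples of distinct points of `PG(1, q)` lie in the same orbit of `SL(2, q)` iff the
quadratic character takes the same value on the products `[v₀ v₁][v₁ v₂][v₂ v₀]` of brackets of
their homogeneous coordinates. An element of `GL(2, q)` of nonsquare determinant swaps the two
orbits, so they have the same size, and double counting incidences between triples and blocks shows
that `(q, k)` gives a 3-design iff `B` contains equally many triples of either sign.

The sign of a triple in `B` is a product of values `χ (β ^ a - β ^ b)`. Since `2k ∣ q - 1`, both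
`β` and `-1 = β ^ (k / 2)` are squares, so only the values `χ (1 - β ^ n)` matter. Those at even `n`
are determined by `n ≤ k / 2 - 1` through the reflection `n ↦ k - n`. Those at odd `n` follow from
`(1 - β ^ n) (1 - β ^ (n + k / 2)) = 1 - β ^ (2 n)`, where `n + k / 2` is even, unless
`β ^ n = -1`, when the value is `χ 2`.
-/

open MulAction Projectivization
open scoped LinearAlgebra.Projectivization Pointwise MatrixGroups

section DoubleCounting

variable {G α β : Type*} [Group G] [MulAction G α] [MulAction G β]

lemma ncard_setOf_mem_orbit_smul {r : α → β → Prop} (hr : ∀ (g : G) a b, r (g • a) (g • b) ↔ r a b)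
    (g : G) (a : α) (b : β) :
    {b' ∈ orbit G b | r (g • a) b'}.ncard = {b' ∈ orbit G b | r a b'}.ncard := by
  rw [← Set.ncard_smul_set g {b' ∈ orbit G b | r a b'}]
  congr 1
  ext b'
  have mem_orbit_iff : g⁻¹ • b' ∈ orbit G b ↔ b' ∈ orbit G b := by
    rw [← orbit_eq_iff, orbit_smul, orbit_eq_iff]
  rw [Set.mem_smul_set_iff_inv_smul_mem, Set.mem_ofPred, Set.mem_ofPred, mem_orbit_iff, ← hr g a,
    smul_inv_smul]

lemma ncard_orbit_mul_ncard_incident {r : α → β → Prop}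
    (hr : ∀ (g : G) a b, r (g • a) (g • b) ↔ r a b) (a : α) (b : β)
    [Finite (orbit G a)] [Finite (orbit G b)] :
    (orbit G a).ncard * {b' ∈ orbit G b | r a b'}.ncard =
      (orbit G b).ncard * {a' ∈ orbit G a | r a' b}.ncard := by
  classical
  have := Fintype.ofFinite (orbit G a)
  have := Fintype.ofFinite (orbit G b)
  rw [Set.ncard_eq_toFinset_card', Set.ncard_eq_toFinset_card' (orbit G b)]
  refine Finset.card_mul_eq_card_mul r (fun a' ha' ↦ ?_) (fun b' hb' ↦ ?_)
  · obtain ⟨g, rfl⟩ := Set.mem_toFinset.1 ha'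
    rw [← ncard_setOf_mem_orbit_smul hr g a b, ← Set.ncard_coe_finset]
    simp [Finset.bipartiteAbove]
  · obtain ⟨g, rfl⟩ := Set.mem_toFinset.1 hb'
    rw [← ncard_setOf_mem_orbit_smul (r := fun b a ↦ r a b) (fun g b a ↦ hr g a b) g b a,
      ← Set.ncard_coe_finset]
    simp [Finset.bipartiteBelow]

end DoubleCounting

section TripleDisc

section CommRing

variable {R : Type*} [CommRing R]

/-- The bracket `[u v]` of two plane vectors. Over a field it is zero iff they are proportional. -/
def bracket (u v : Fin 2 → R) : R := det (of ![u, v])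

lemma bracket_eq (u v : Fin 2 → R) : bracket u v = u 0 * v 1 - u 1 * v 0 := by
  simp [bracket, det_fin_two]

/-- The cyclic product `[v₀ v₁][v₁ v₂][v₂ v₀]` of brackets. It is homogeneous of degree 2 in each
vector, so its square class is an invariant of the three projective points. -/
def tripleDisc (v : Fin 3 → Fin 2 → R) : R :=
  bracket (v 0) (v 1) * bracket (v 1) (v 2) * bracket (v 2) (v 0)

lemma tripleDisc_mulVec (M : Matrix (Fin 2) (Fin 2) R) (v : Fin 3 → Fin 2 → R) :
    tripleDisc (fun i ↦ M *ᵥ v i) = M.det ^ 2 * (M.det * tripleDisc v) := by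
  simp only [tripleDisc, bracket_eq, det_fin_two, mulVec, dotProduct, Fin.sum_univ_two]
  ring

lemma tripleDisc_smul (c : Fin 3 → R) (v : Fin 3 → Fin 2 → R) :
    tripleDisc (fun i ↦ c i • v i) = (c 0 * c 1 * c 2) ^ 2 * tripleDisc v := by
  simp only [tripleDisc, bracket_eq, Pi.smul_apply, smul_eq_mul]
  ring

end CommRing

variable {F : Type*} [Field F]

lemma bracket_eq_zero_iff_mk_eq {u v : Fin 2 → F} (hu : u ≠ 0) (hv : v ≠ 0) :
    bracket u v = 0 ↔ mk F u hu = mk F v hv := by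
  rw [bracket, ← not_iff_not, ← Ne, ← Ne, ← isUnit_iff_ne_zero, ← isUnit_iff_isUnit_det,
    ← linearIndependent_rows_iff_isUnit, ← independent_pair_iff_ne,
    independent_mk_iff_LinearIndependent]
  rfl

lemma tripleDisc_ne_zero_iff_injective {v : Fin 3 → Fin 2 → F} (hv : ∀ i, v i ≠ 0) :
    tripleDisc v ≠ 0 ↔ Function.Injective fun i ↦ mk F (v i) (hv i) := by
  simp only [tripleDisc, mul_ne_zero_iff, Ne, bracket_eq_zero_iff_mk_eq (hv _) (hv _)]
  constructor
  · intro h i j hij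
    fin_cases i <;> fin_cases j <;> grind
  · intro h
    simp [h.eq_iff' rfl]

lemma exists_eq_mk {ι K V : Type*} [DivisionRing K] [AddCommGroup V] [Module K V] (t : ι → ℙ K V) :
    ∃ (v : ι → V) (hv : ∀ i, v i ≠ 0), t = fun i ↦ mk K (v i) (hv i) :=
  ⟨fun i ↦ (t i).rep, fun i ↦ rep_nonzero _, by simp only [mk_rep]⟩

variable (F) in
/-- The triple `[1 : 0], [0 : 1], [1 : 1]`, the base point for the action of `GL(2, F)`. -/
def standardTriple : Fin 3 → ℙ F (Fin 2 → F) := fun i ↦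
  mk F (![![1, 0], ![0, 1], ![1, 1]] i) (by fin_cases i <;> simp)

lemma exists_GL_smul_standardTriple_eq {t : Fin 3 → ℙ F (Fin 2 → F)} (ht : Function.Injective t) :
    ∃ g : GL (Fin 2) F, g • standardTriple F = t := by
  obtain ⟨v, hv, rfl⟩ := exists_eq_mk t
  rw [← tripleDisc_ne_zero_iff_injective] at ht
  let M : Matrix (Fin 2) (Fin 2) F :=
    (of ![bracket (v 1) (v 2) • v 0, bracket (v 2) (v 0) • v 1])ᵀ
  have det_M : M.det = tripleDisc v := by
    simp only [M, tripleDisc, bracket_eq, det_fin_two, transpose_apply, of_apply, cons_val_zero,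
      cons_val_one, Pi.smul_apply, smul_eq_mul]
    ring
  refine ⟨.mkOfDetNeZero M (det_M ▸ ht), funext fun i ↦ (mk_eq_mk_iff' ..).2
    ⟨![bracket (v 1) (v 2), bracket (v 2) (v 0), -bracket (v 0) (v 1)] i, ?_⟩⟩
  -- At `i = 2` this is the Plücker relation `[v₁ v₂] v₀ + [v₂ v₀] v₁ + [v₀ v₁] v₂ = 0`.
  ext j
  fin_cases i <;> fin_cases j <;> simp [M, bracket_eq] <;> ring

lemma exists_GL_smul_eq {t t' : Fin 3 → ℙ F (Fin 2 → F)} (ht : Function.Injective t)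
    (ht' : Function.Injective t') : ∃ g : GL (Fin 2) F, g • t = t' := by
  obtain ⟨g, rfl⟩ := exists_GL_smul_standardTriple_eq ht
  obtain ⟨g', rfl⟩ := exists_GL_smul_standardTriple_eq ht'
  exact ⟨g' * g⁻¹, by rw [mul_smul, inv_smul_smul]⟩

lemma exists_SL_smul_eq_of_isSquare_det {g : GL (Fin 2) F}
    (hg : IsSquare (g : Matrix (Fin 2) (Fin 2) F).det) :
    ∃ h : SL(2, F), ∀ x : ℙ F (Fin 2 → F), h • x = g • x := by
  obtain ⟨r, hr⟩ := hg
  have r_ne_zero : r ≠ 0 := by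
    rintro rfl
    simpa [hr] using g.det_ne_zero
  refine ⟨⟨r⁻¹ • g, ?_⟩, fun x ↦ ?_⟩
  · rw [det_smul, hr, Fintype.card_fin]
    field_simp
  · induction x with | h v hv =>
    exact (mk_eq_mk_iff' ..).2 ⟨r⁻¹, (smul_mulVec r⁻¹ (g : Matrix (Fin 2) (Fin 2) F) v).symm⟩

end TripleDisc

section TripleSign

variable {F : Type*} [Field F] [Fintype F] [DecidableEq F]

lemma quadraticChar_sq_mul {c : F} (hc : c ≠ 0) (a : F) :
    quadraticChar F (c ^ 2 * a) = quadraticChar F a := by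
  rw [map_mul, quadraticChar_sq_one' hc, one_mul]

/-- The quadratic character of `tripleDisc`, separating the two `SL(2, F)`-orbits of ordered triples
of distinct points; it is `0` on triples with a repetition. It is computed from the representatives
chosen by `Projectivization.rep`, on which it does not depend (`tripleSign_mk`). -/
def tripleSign (t : Fin 3 → ℙ F (Fin 2 → F)) : ℤ :=
  quadraticChar F (tripleDisc fun i ↦ (t i).rep)

lemma tripleSign_mk {v : Fin 3 → Fin 2 → F} (hv : ∀ i, v i ≠ 0) :
    tripleSign (fun i ↦ mk F (v i) (hv i)) = quadraticChar F (tripleDisc v) := by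
  choose c hc using fun i ↦ exists_smul_eq_mk_rep F (v i) (hv i)
  simp_rw [tripleSign, ← hc, Units.smul_def]
  rw [tripleDisc_smul, quadraticChar_sq_mul (by simp)]

lemma tripleSign_smul (g : GL (Fin 2) F) (t : Fin 3 → ℙ F (Fin 2 → F)) :
    tripleSign (g • t) = quadraticChar F (g : Matrix (Fin 2) (Fin 2) F).det * tripleSign t := by
  obtain ⟨v, hv, rfl⟩ := exists_eq_mk t
  have smul_eq : (g • fun i ↦ mk F (v i) (hv i)) = fun i ↦ mk F
    ((g : Matrix (Fin 2) (Fin 2) F) *ᵥ v i) ((smul_ne_zero_iff_ne g).2 (hv i)) := rfl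
  rw [smul_eq, tripleSign_mk, tripleSign_mk, tripleDisc_mulVec, quadraticChar_sq_mul g.det_ne_zero,
    map_mul]

lemma tripleSign_SL_smul (g : SL(2, F)) (t : Fin 3 → ℙ F (Fin 2 → F)) :
    tripleSign (g • t) = tripleSign t := by
  have := tripleSign_smul (g : GL (Fin 2) F) t
  rwa [SpecialLinearGroup.coe_GL_coe_matrix, g.det_coe, map_one, one_mul] at this

lemma tripleSign_ne_zero_iff_injective {t : Fin 3 → ℙ F (Fin 2 → F)} :
    tripleSign t ≠ 0 ↔ Function.Injective t := by
  obtain ⟨v, hv, rfl⟩ := exists_eq_mk t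
  rw [tripleSign_mk, Ne, quadraticChar_eq_zero_iff, ← Ne, tripleDisc_ne_zero_iff_injective]

lemma tripleSign_eq_one_or_neg_one {t : Fin 3 → ℙ F (Fin 2 → F)} (ht : Function.Injective t) :
    tripleSign t = 1 ∨ tripleSign t = -1 :=
  quadraticChar_dichotomy (quadraticChar_eq_zero_iff.not.1 (tripleSign_ne_zero_iff_injective.2 ht))

lemma orbit_SL_eq {t : Fin 3 → ℙ F (Fin 2 → F)} (ht : Function.Injective t) :
    orbit SL(2, F) t = {t' | tripleSign t' = tripleSign t} := by
  ext t'
  constructor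
  · rintro ⟨g, rfl⟩
    exact tripleSign_SL_smul g t
  · intro (same_sign : tripleSign t' = tripleSign t)
    have sign_ne_zero := tripleSign_ne_zero_iff_injective.2 ht
    obtain ⟨g, rfl⟩ :=
      exists_GL_smul_eq ht (tripleSign_ne_zero_iff_injective.1 (same_sign ▸ sign_ne_zero))
    rw [tripleSign_smul, mul_eq_right₀ sign_ne_zero,
      quadraticChar_one_iff_isSquare g.det_ne_zero] at same_sign
    obtain ⟨h, hg⟩ := exists_SL_smul_eq_of_isSquare_det same_sign
    exact ⟨h, funext fun i ↦ hg (t i)⟩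

lemma exists_GL_tripleSign_smul_eq_neg (hF : ringChar F ≠ 2) :
    ∃ g : GL (Fin 2) F, ∀ t : Fin 3 → ℙ F (Fin 2 → F), tripleSign (g • t) = -tripleSign t := by
  obtain ⟨u, hu⟩ := quadraticChar_exists_neg_one' hF
  obtain ⟨g, rfl⟩ := GeneralLinearGroup.det_surjective (n := Fin 2) u
  exact ⟨g, fun t ↦ by rw [tripleSign_smul, ← GeneralLinearGroup.val_det_apply, hu, neg_one_mul]⟩

lemma ncard_tripleSign_eq_neg (hF : ringChar F ≠ 2) (ε : ℤ) :
    {t : Fin 3 → ℙ F (Fin 2 → F) | tripleSign t = -ε}.ncard =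
      {t : Fin 3 → ℙ F (Fin 2 → F) | tripleSign t = ε}.ncard := by
  obtain ⟨g, hg⟩ := exists_GL_tripleSign_smul_eq_neg hF
  rw [← Set.ncard_smul_set g {t | tripleSign t = -ε}]
  congr 1
  ext t
  rw [Set.mem_smul_set_iff_inv_smul_mem, Set.mem_ofPred, Set.mem_ofPred, ← neg_inj, ← hg,
    smul_inv_smul, neg_neg]

end TripleSign

section StarterBlock

variable {F : Type} [Field F] {β : F} {k : ℕ}

lemma embedPt_injective : Function.Injective (embedPt F) := fun a b h ↦ by
  rw [embedPt, embedPt, ← bracket_eq_zero_iff_mk_eq] at h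
  simpa [bracket_eq, sub_eq_zero] using h

lemma embedPt_pow_injective (hβ : IsPrimitiveRoot β k) :
    Function.Injective fun i : Fin k ↦ embedPt F (β ^ (i : ℕ)) :=
  fun i j hij ↦ Fin.ext (hβ.pow_inj i.2 j.2 (embedPt_injective hij))

lemma starterB_eq_range [NeZero k] (hβ : IsPrimitiveRoot β k) :
    starterB F k = Set.range fun i : Fin k ↦ embedPt F (β ^ (i : ℕ)) := by
  have rootsOfUnity_eq : {x : F | x ^ k = 1} = Set.range fun i : Fin k ↦ β ^ (i : ℕ) := by
    ext x
    constructor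
    · intro hx
      obtain ⟨i, hi, rfl⟩ := hβ.eq_pow_of_pow_eq_one hx
      exact ⟨⟨i, hi⟩, rfl⟩
    · rintro ⟨i, rfl⟩
      exact (pow_right_comm ..).trans (by rw [hβ.pow_eq_one, one_pow])
  rw [starterB, rootsOfUnity_eq, ← Set.range_comp]
  rfl

end StarterBlock

section Design

variable {F : Type} [Field F]

lemma designBlocks_eq_orbit (k : ℕ) : designBlocks F k = orbit SL(2, F) (starterB F k) :=
  Set.ext fun _ ↦ exists_congr fun _ ↦ eq_comm

/-- The number of blocks through the points of an ordered triple. -/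
def blockCount (k : ℕ) (t : Fin 3 → ℙ F (Fin 2 → F)) : ℕ :=
  {S ∈ designBlocks F k | Set.range t ⊆ S}.ncard

lemma isThreeDesign_iff_blockCount_eq {k lam : ℕ} :
    isThreeDesign F k lam ↔
      0 < lam ∧ ∀ t, Function.Injective t → blockCount (F := F) k t = lam := by
  classical
  refine and_congr_right fun _ ↦ ⟨fun h t ht ↦ ?_, fun h T hT ↦ ?_⟩
  · simpa [blockCount] using
      h (Finset.univ.image t) (by simp [Finset.card_image_of_injective _ ht])
  · let e := T.equivFinOfCardEq hT
    have range_e : Set.range (Subtype.val ∘ e.symm) = (T : Set (ℙ F (Fin 2 → F))) :=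
      (e.symm.surjective.range_comp _).trans Subtype.range_coe
    rw [← range_e]
    exact h _ (Subtype.val_injective.comp e.symm.injective)

variable [Finite F]

lemma blockCount_pos {k : ℕ} {t : Fin 3 → ℙ F (Fin 2 → F)} (ht : Set.range t ⊆ starterB F k) :
    0 < blockCount k t := by
  refine (Set.ncard_pos).2 ⟨starterB F k, ?_, ht⟩
  rw [designBlocks_eq_orbit]
  exact mem_orbit_self _

lemma gives3Design_iff_blockCount_eq {k : ℕ} {t₀ : Fin 3 → ℙ F (Fin 2 → F)}
    (ht₀ : Function.Injective t₀) (hB : Set.range t₀ ⊆ starterB F k) :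
    gives3Design F k ↔ ∀ t t' : Fin 3 → ℙ F (Fin 2 → F), Function.Injective t →
      Function.Injective t' → blockCount k t = blockCount k t' := by
  simp only [gives3Design, isThreeDesign_iff_blockCount_eq]
  constructor
  · rintro ⟨lam, -, h⟩ t t' ht ht'
    rw [h t ht, h t' ht']
  · exact fun h ↦ ⟨blockCount k t₀, blockCount_pos hB, fun t ht ↦ h t t₀ ht ht₀⟩

end Design

/-- The triples of exponents whose powers of `β` form a triple of points of sign `ε`. -/
def exponentTriples {F : Type*} [Field F] [Fintype F] [DecidableEq F] (β : F) (k : ℕ) (ε : ℤ) :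
    Set (Fin 3 → Fin k) :=
  {s | quadraticChar F ((β ^ (s 0 : ℕ) - β ^ (s 1 : ℕ)) * (β ^ (s 1 : ℕ) - β ^ (s 2 : ℕ)) *
    (β ^ (s 2 : ℕ) - β ^ (s 0 : ℕ))) = ε}

section DesignCriterion

variable {F : Type} [Field F] [Fintype F] [DecidableEq F]

variable (F) in
/-- The ordered triples of sign `ε` with all three points in the starter block. -/
def starterTriples (k : ℕ) (ε : ℤ) : Set (Fin 3 → ℙ F (Fin 2 → F)) :=
  {t | tripleSign t = ε ∧ Set.range t ⊆ starterB F k}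

lemma ncard_tripleSign_mul_blockCount (k : ℕ) {t : Fin 3 → ℙ F (Fin 2 → F)}
    (ht : Function.Injective t) :
    {t' : Fin 3 → ℙ F (Fin 2 → F) | tripleSign t' = tripleSign t}.ncard * blockCount k t =
      (designBlocks F k).ncard * (starterTriples F k (tripleSign t)).ncard := by
  have range_subset_iff (g : SL(2, F)) (t : Fin 3 → ℙ F (Fin 2 → F)) (S : Set (ℙ F (Fin 2 → F))) :
      Set.range (g • t) ⊆ g • S ↔ Set.range t ⊆ S := by
    have range_smul : Set.range (g • t) = g • Set.range t := (Set.smul_set_range g t).symm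
    rw [range_smul, Set.smul_set_subset_smul_set_iff]
  have count := ncard_orbit_mul_ncard_incident (r := fun t S ↦ Set.range t ⊆ S) range_subset_iff t
    (starterB F k)
  rwa [orbit_SL_eq ht, ← designBlocks_eq_orbit] at count

lemma blockCount_eq_iff (hF : ringChar F ≠ 2) (k : ℕ) {t t' : Fin 3 → ℙ F (Fin 2 → F)}
    (ht : Function.Injective t) (ht' : Function.Injective t') :
    blockCount k t = blockCount k t' ↔
      (starterTriples F k (tripleSign t)).ncard = (starterTriples F k (tripleSign t')).ncard := by
  have triples_pos : 0 < {t' : Fin 3 → ℙ F (Fin 2 → F) | tripleSign t' = tripleSign t}.ncard :=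
    (Set.ncard_pos).2 ⟨t, rfl⟩
  have blocks_pos : 0 < (designBlocks F k).ncard := by
    rw [designBlocks_eq_orbit]
    exact (Set.ncard_pos).2 ⟨_, mem_orbit_self _⟩
  have card_eq : {s : Fin 3 → ℙ F (Fin 2 → F) | tripleSign s = tripleSign t'}.ncard =
      {s : Fin 3 → ℙ F (Fin 2 → F) | tripleSign s = tripleSign t}.ncard := by
    rcases tripleSign_eq_one_or_neg_one ht with h | h <;>
      rcases tripleSign_eq_one_or_neg_one ht' with h' | h' <;>
      simp only [h, h', ncard_tripleSign_eq_neg hF]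
  have count := ncard_tripleSign_mul_blockCount k ht
  have count' := ncard_tripleSign_mul_blockCount k ht'
  rw [card_eq] at count'
  rw [← Nat.mul_right_inj triples_pos.ne', count, count', Nat.mul_right_inj blocks_pos.ne']

lemma gives3Design_iff_ncard_starterTriples_eq (hF : ringChar F ≠ 2) {k : ℕ}
    {t₀ : Fin 3 → ℙ F (Fin 2 → F)} (ht₀ : Function.Injective t₀)
    (hB : Set.range t₀ ⊆ starterB F k) :
    gives3Design F k ↔ (starterTriples F k 1).ncard = (starterTriples F k (-1)).ncard := by
  rw [gives3Design_iff_blockCount_eq ht₀ hB]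
  constructor
  · intro h
    obtain ⟨g, hg⟩ := exists_GL_tripleSign_smul_eq_neg hF
    have ht₁ : Function.Injective (g • t₀) := (MulAction.injective g).comp ht₀
    have key := (blockCount_eq_iff hF k ht₀ ht₁).1 (h _ _ ht₀ ht₁)
    rw [hg] at key
    rcases tripleSign_eq_one_or_neg_one ht₀ with h₀ | h₀ <;> rw [h₀] at key
    · exact key
    · rw [key, neg_neg]
  · intro h t t' ht ht'
    rw [blockCount_eq_iff hF k ht ht']
    rcases tripleSign_eq_one_or_neg_one ht with ht | ht <;>
      rcases tripleSign_eq_one_or_neg_one ht' with ht' | ht' <;> simp only [ht, ht', h]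

lemma tripleSign_embedPt (x : Fin 3 → F) :
    tripleSign (fun i ↦ embedPt F (x i)) =
      quadraticChar F ((x 0 - x 1) * (x 1 - x 2) * (x 2 - x 0)) := by
  simp only [embedPt]
  rw [tripleSign_mk]
  simp [tripleDisc, bracket_eq]

variable {β : F} {k : ℕ}

lemma ncard_starterTriples [NeZero k] (hβ : IsPrimitiveRoot β k) (ε : ℤ) :
    (starterTriples F k ε).ncard = (exponentTriples β k ε).ncard := by
  rw [← Set.ncard_image_of_injective _ (embedPt_pow_injective hβ).comp_left]
  congr 1
  ext t
  simp only [starterTriples, starterB_eq_range hβ, Set.range_subset_range_iff_exists_comp]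
  constructor
  · rintro ⟨hs, s, rfl⟩
    exact ⟨s, (tripleSign_embedPt _).symm.trans hs, rfl⟩
  · rintro ⟨s, hs, rfl⟩
    exact ⟨(tripleSign_embedPt _).trans hs, s, rfl⟩

theorem gives3Design_iff_ncard_exponentTriples_eq (hF : ringChar F ≠ 2) (hk : 3 ≤ k)
    (hβ : IsPrimitiveRoot β k) :
    gives3Design F k ↔ (exponentTriples β k 1).ncard = (exponentTriples β k (-1)).ncard := by
  have : NeZero k := ⟨by omega⟩
  rw [← ncard_starterTriples hβ, ← ncard_starterTriples hβ]
  refine gives3Design_iff_ncard_starterTriples_eq hF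
    ((embedPt_pow_injective hβ).comp (Fin.castLE_injective hk)) ?_
  rw [starterB_eq_range hβ]
  exact Set.range_comp_subset_range _ _

end DesignCriterion

lemma ringChar_ne_two_of_odd_card {F : Type*} [Field F] [Fintype F]
    (hF : Odd (Fintype.card F)) : ringChar F ≠ 2 := by
  rw [Ne, FiniteField.even_card_iff_char_two, ← Nat.even_iff, Nat.not_even_iff_odd]
  exact hF

lemma pow_eq_neg_one_of_isPrimitiveRoot_two_mul {R : Type*} [CommRing R] [NoZeroDivisors R]
    {β : R} {m : ℕ} (hm : 0 < m) (hβ : IsPrimitiveRoot β (2 * m)) : β ^ m = -1 :=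
  (hβ.pow (by omega) (mul_comm 2 m)).eq_neg_one_of_two_right

section QuadraticChar

variable {F : Type*} [Field F] [Fintype F] [DecidableEq F] {β : F} {m : ℕ}

lemma quadraticChar_eq_one_of_even_div_orderOf (hdvd : orderOf β ∣ Fintype.card F - 1)
    (heven : Even ((Fintype.card F - 1) / orderOf β)) : quadraticChar F β = 1 := by
  have one_lt_card := Fintype.one_lt_card (α := F)
  obtain ⟨c, hc⟩ := heven.two_dvd
  have card_eq : Fintype.card F - 1 = orderOf β * (2 * c) := by
    rw [← hc, Nat.mul_div_cancel' hdvd]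
  have β_ne_zero : β ≠ 0 := by
    rintro rfl
    rw [orderOf_zero] at card_eq
    omega
  have hF : ringChar F ≠ 2 := ringChar_ne_two_of_odd_card (by grind)
  have half_card : Fintype.card F / 2 = orderOf β * c := by grind
  rw [quadraticChar_one_iff_isSquare β_ne_zero, FiniteField.isSquare_iff hF β_ne_zero, half_card,
    pow_mul, pow_orderOf_eq_one, one_pow]

lemma quadraticChar_one_sub_pow_mul (hβ : β ^ m = -1) (n : ℕ) :
    quadraticChar F (1 - β ^ (n + m)) * quadraticChar F (1 - β ^ n) =
      quadraticChar F (1 - β ^ (2 * n)) := by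
  rw [← map_mul, pow_add, hβ, mul_comm 2, pow_mul]
  ring_nf

lemma quadraticChar_neg_of_pow_eq_neg_one (hχ : quadraticChar F β = 1) (hβ : β ^ m = -1) (a : F) :
    quadraticChar F (-a) = quadraticChar F a := by
  rw [neg_eq_neg_one_mul, ← hβ, map_mul, map_pow, hχ, one_pow, one_mul]

lemma quadraticChar_one_sub_pow_eq_of_pow_add_eq_one (hχ : quadraticChar F β = 1)
    (hβ : β ^ m = -1) {i j : ℕ} (hij : β ^ (i + j) = 1) :
    quadraticChar F (1 - β ^ i) = quadraticChar F (1 - β ^ j) := by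
  have factor : 1 - β ^ i = -(β ^ i * (1 - β ^ j)) := by
    linear_combination -hij
  rw [factor, quadraticChar_neg_of_pow_eq_neg_one hχ hβ, map_mul, map_pow, hχ, one_pow, one_mul]

end QuadraticChar

section QuadraticCharAgreement

variable {F F' : Type*} [Field F] [Fintype F] [DecidableEq F] [Field F'] [Fintype F']
  [DecidableEq F'] {β : F} {β' : F'} {m : ℕ}

lemma quadraticChar_one_sub_pow_congr_of_even (hm : Odd m) (hβ : β ^ m = -1) (hβ' : β' ^ m = -1)
    (hχ : quadraticChar F β = 1) (hχ' : quadraticChar F' β' = 1)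
    (hsmall : ∀ j, 1 ≤ 2 * j → 2 * j ≤ m - 1 →
      quadraticChar F (1 - β ^ (2 * j)) = quadraticChar F' (1 - β' ^ (2 * j)))
    {n : ℕ} (hn : Even n) :
    quadraticChar F (1 - β ^ n) = quadraticChar F' (1 - β' ^ n) := by
  have hβm : β ^ (2 * m) = 1 := by rw [mul_comm, pow_mul, hβ, neg_one_sq]
  have hβm' : β' ^ (2 * m) = 1 := by rw [mul_comm, pow_mul, hβ', neg_one_sq]
  obtain ⟨j, rfl⟩ := hn.exists_two_nsmul
  rw [smul_eq_mul, pow_eq_pow_mod _ hβm, pow_eq_pow_mod _ hβm', Nat.mul_mod_mul_left]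
  have hj := Nat.mod_lt j hm.pos
  generalize j % m = j at hj
  rcases Nat.eq_zero_or_pos j with rfl | j_pos
  · simp
  rcases le_or_gt (2 * j) (m - 1) with hjm | hjm
  · exact hsmall j (by omega) hjm
  · have exponents : 2 * j + 2 * (m - j) = 2 * m := by omega
    rw [quadraticChar_one_sub_pow_eq_of_pow_add_eq_one hχ hβ (exponents ▸ hβm),
      quadraticChar_one_sub_pow_eq_of_pow_add_eq_one hχ' hβ' (exponents ▸ hβm')]
    exact hsmall _ (by omega) (by grind)

lemma quadraticChar_one_sub_pow_congr_of_odd (hm : Odd m) (hβ : β ^ m = -1) (hβ' : β' ^ m = -1)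
    (heven : ∀ n, Even n → quadraticChar F (1 - β ^ n) = quadraticChar F' (1 - β' ^ n))
    (htwo : quadraticChar F 2 = quadraticChar F' 2) {n : ℕ} (hn : Odd n) :
    quadraticChar F (1 - β ^ n) = quadraticChar F' (1 - β' ^ n) := by
  have shift := heven (n + m) (hn.add_odd hm)
  have double := heven (2 * n) (even_two_mul n)
  rw [← quadraticChar_one_sub_pow_mul hβ, ← quadraticChar_one_sub_pow_mul hβ', shift] at double
  by_cases hzero : quadraticChar F' (1 - β' ^ (n + m)) = 0
  · have pow_eq : β ^ n = -1 := by
      rw [hzero, quadraticChar_eq_zero_iff, pow_add, hβ] at shift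
      linear_combination shift
    have pow_eq' : β' ^ n = -1 := by
      rw [quadraticChar_eq_zero_iff, pow_add, hβ'] at hzero
      linear_combination hzero
    rw [pow_eq, pow_eq', sub_neg_eq_add, sub_neg_eq_add, one_add_one_eq_two, one_add_one_eq_two,
      htwo]
  · exact mul_left_cancel₀ hzero double

lemma quadraticChar_pow_sub_pow_congr (hβ : β ^ m = -1) (hβ' : β' ^ m = -1)
    (hχ : quadraticChar F β = 1) (hχ' : quadraticChar F' β' = 1)
    (h : ∀ n, quadraticChar F (1 - β ^ n) = quadraticChar F' (1 - β' ^ n)) (a b : ℕ) :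
    quadraticChar F (β ^ a - β ^ b) = quadraticChar F' (β' ^ a - β' ^ b) := by
  wlog hab : a ≤ b generalizing a b
  · rw [← neg_sub, quadraticChar_neg_of_pow_eq_neg_one hχ hβ, this b a (by omega),
      ← quadraticChar_neg_of_pow_eq_neg_one hχ' hβ', neg_sub]
  obtain ⟨d, rfl⟩ := Nat.exists_eq_add_of_le hab
  rw [pow_add, pow_add, ← mul_one_sub, ← mul_one_sub, map_mul, map_mul, map_pow, map_pow, hχ, hχ',
    h, one_pow]

lemma exponentTriples_congr (h : ∀ a b,
    quadraticChar F (β ^ a - β ^ b) = quadraticChar F' (β' ^ a - β' ^ b)) (k : ℕ) (ε : ℤ) :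
    exponentTriples β k ε = exponentTriples β' k ε := by
  simp only [exponentTriples, map_mul, h]

end QuadraticCharAgreement

/-- Proposition 2.7(ii): for `k ≡ 2 (mod 4)`, whether `(q,k)` gives a 3-design is
determined by the sequence `(χ(1-β²), χ(1-β⁴), …, χ(1-β^(k/2-1)), χ(2))`, where
`β` is a primitive `k`-th root of unity. -/
theorem stmt_6 (F F' : Type) [Field F] [Fintype F] [DecidableEq F]
    [Field F'] [Fintype F'] [DecidableEq F']
    (q q' k : ℕ) (hq : Fintype.card F = q) (hq' : Fintype.card F' = q')
    (hqodd : Odd q) (hq'odd : Odd q') (hq4 : q % 4 = 1) (hq'4 : q' % 4 = 1)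
    (hk4 : k % 4 = 2) (hk3 : 3 < k)
    (hkdvd : k ∣ q - 1) (hk'dvd : k ∣ q' - 1) (hkq : k < q - 1) (hkq' : k < q' - 1)
    (he : Even ((q - 1) / k)) (he' : Even ((q' - 1) / k))
    (β : F) (β' : F') (hβ : orderOf β = k) (hβ' : orderOf β' = k)
    (hch : ∀ j : ℕ, 1 ≤ 2 * j → 2 * j ≤ k / 2 - 1 →
      quadraticChar F (1 - β ^ (2 * j)) = quadraticChar F' (1 - β' ^ (2 * j)))
    (hch2 : quadraticChar F 2 = quadraticChar F' 2) :
    gives3Design F k ↔ gives3Design F' k := by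
  subst hq hq'
  obtain ⟨m, rfl⟩ : ∃ m, k = 2 * m := ⟨k / 2, by omega⟩
  have hm : Odd m := Nat.odd_iff.2 (by omega)
  rw [Nat.mul_div_cancel_left m two_pos] at hch
  have primitive : IsPrimitiveRoot β (2 * m) := hβ ▸ .orderOf β
  have primitive' : IsPrimitiveRoot β' (2 * m) := hβ' ▸ .orderOf β'
  have pow_m : β ^ m = -1 := pow_eq_neg_one_of_isPrimitiveRoot_two_mul hm.pos primitive
  have pow_m' : β' ^ m = -1 := pow_eq_neg_one_of_isPrimitiveRoot_two_mul hm.pos primitive'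
  have χβ : quadraticChar F β = 1 := quadraticChar_eq_one_of_even_div_orderOf
    (hβ ▸ hkdvd) (hβ ▸ he)
  have χβ' : quadraticChar F' β' = 1 := quadraticChar_eq_one_of_even_div_orderOf
    (hβ' ▸ hk'dvd) (hβ' ▸ he')
  have agree_even (n : ℕ) (hn : Even n) :=
    quadraticChar_one_sub_pow_congr_of_even hm pow_m pow_m' χβ χβ' hch hn
  have agree (n : ℕ) : quadraticChar F (1 - β ^ n) = quadraticChar F' (1 - β' ^ n) :=
    n.even_or_odd.elim (agree_even n)
      (quadraticChar_one_sub_pow_congr_of_odd hm pow_m pow_m' agree_even hch2)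
  have triples_eq := exponentTriples_congr
    (quadraticChar_pow_sub_pow_congr pow_m pow_m' χβ χβ' agree) (2 * m)
  have hF := ringChar_ne_two_of_odd_card hqodd
  have hF' := ringChar_ne_two_of_odd_card hq'odd
  rw [gives3Design_iff_ncard_exponentTriples_eq hF hk3.le primitive,
    gives3Design_iff_ncard_exponentTriples_eq hF' hk3.le primitive', triples_eq, triples_eq]
end
end

section
/- Let q be an odd prime power, let n be an even positive integer, and let k be a divisor of q−1 with 3 < k < q−1 and with (q^n−1)/k even. Then (q^n, k) does not give a 3-design, i.e., the PSL(2,q^n)-orbit of the subgroup of order k of F_{q^n}^× is not the block set of a 3-design on PG(1,q^n). -/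
/-!
Setting: `F` is a finite field of order `q`. The projective line `PG(1,q)` is
modelled as `Projectivization F (Fin 2 → F)`. Since scalar matrices act trivially
on the projective line, the images of a set under all elements of `SL(2,F)` form
exactly its `PSL(2,F)`-orbit; `mapSL g` is the map of the projective line induced
by `g : SL(2,F)`. For `k ∣ q - 1`, the unique subgroup of order `k` of `Fˣ` is the
set of `k`-th roots of unity `{x : F | x ^ k = 1}`, embedded into the projective
line via `x ↦ [x : 1]`. `(q, k)` gives a 3-design iff there is `lam > 0` such that
every 3-subset of the projective line lies in exactly `lam` blocks of the orbit.
-/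

noncomputable section

open Matrix

/-!
The class modulo squares of `det(u, v) * det(v, w) * det(w, u)` depends only on the points of the
projective line spanned by `u`, `v`, `w`, because each vector occurs twice, and it is invariant
under `SL(2, F)`. For points `x`, `y`, `z` of `F` the product is `(x - y) * (y - z) * (z - x)`.

If `F` has order `q ^ 2`, then the `k`-th roots of unity for `k ∣ q - 1` lie in the subfield of
order `q`, all of whose elements are squares in `F`. Hence every triple of points in a block has
square class, whereas the class of the triple `∞, 0, x` is that of `x`. If `q` is odd we may take
`x` to be a nonsquare, and the resulting triple lies in no block. The case of order `q ^ n` with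
`n` even is reduced to this one by replacing `q` with `q ^ (n / 2)`.
-/

section CyclicDet

variable {R : Type*} [CommRing R]

/-- The product of the three pairwise determinants of the vectors `u`, `v`, `w` of the plane, taken
in cyclic order. -/
def cyclicDet (u v w : Fin 2 → R) : R :=
  det (of ![u, v]) * det (of ![v, w]) * det (of ![w, u])

lemma cyclicDet_smul (a b c : R) (u v w : Fin 2 → R) :
    cyclicDet (a • u) (b • v) (c • w) = (a * b * c) ^ 2 * cyclicDet u v w := by
  simp only [cyclicDet, det_fin_two, of_apply, cons_val_zero, cons_val_one, Pi.smul_apply,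
    smul_eq_mul]
  ring

lemma cyclicDet_mulVec (M : Matrix (Fin 2) (Fin 2) R) (u v w : Fin 2 → R) :
    cyclicDet (M *ᵥ u) (M *ᵥ v) (M *ᵥ w) = M.det ^ 3 * cyclicDet u v w := by
  have det_mulVec (s t : Fin 2 → R) :
      det (of ![M *ᵥ s, M *ᵥ t]) = M.det * det (of ![s, t]) := by
    simp only [det_fin_two, of_apply, cons_val_zero, cons_val_one, mulVec, dotProduct,
      Fin.sum_univ_two]
    ring
  simp only [cyclicDet, det_mulVec]
  ring

end CyclicDet

section SquareTriple

variable {F : Type*} [Field F]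

/-- The ordered triple `P, Q, R` of points of the projective line has square class, i.e. the
`cyclicDet` of its representatives is a square. The choice of representatives does not matter, see
`isSquareTriple_mk`; triples with a repeated point have square class. -/
def IsSquareTriple (P Q R : Projectivization F (Fin 2 → F)) : Prop :=
  IsSquare (cyclicDet P.rep Q.rep R.rep)

lemma isSquareTriple_mk {u v w : Fin 2 → F} (hu : u ≠ 0) (hv : v ≠ 0) (hw : w ≠ 0) :
    IsSquareTriple (Projectivization.mk F u hu) (Projectivization.mk F v hv)
      (Projectivization.mk F w hw) ↔ IsSquare (cyclicDet u v w) := by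
  obtain ⟨a, ha⟩ := Projectivization.exists_smul_eq_mk_rep F u hu
  obtain ⟨b, hb⟩ := Projectivization.exists_smul_eq_mk_rep F v hv
  obtain ⟨c, hc⟩ := Projectivization.exists_smul_eq_mk_rep F w hw
  have hsq : IsSquare (((a * b * c : Fˣ) : F) ^ 2) := IsSquare.sq _
  rw [IsSquareTriple, ← ha, ← hb, ← hc, Units.smul_def, Units.smul_def, Units.smul_def,
    cyclicDet_smul, ← Units.val_mul, ← Units.val_mul]
  refine ⟨fun h => ?_, hsq.mul⟩
  have := h.div hsq
  rwa [mul_div_cancel_left₀ _ (pow_ne_zero 2 (Units.ne_zero _))] at this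

lemma card_eq_three_of_not_isSquareTriple [DecidableEq (Projectivization F (Fin 2 → F))]
    {P Q R : Projectivization F (Fin 2 → F)} (h : ¬ IsSquareTriple P Q R) :
    ({P, Q, R} : Finset _).card = 3 := by
  refine Finset.card_eq_three.2 ⟨P, Q, R, ?_, ?_, ?_, rfl⟩ <;> rintro rfl <;>
    exact h (by simp [IsSquareTriple, cyclicDet, det_fin_two, mul_comm])

end SquareTriple

section ProjectiveLine

variable {F : Type} [Field F]

lemma isSquareTriple_mapSL (g : SpecialLinearGroup (Fin 2) F)
    (P Q R : Projectivization F (Fin 2 → F)) :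
    IsSquareTriple (mapSL g P) (mapSL g Q) (mapSL g R) ↔ IsSquareTriple P Q R := by
  induction P using Projectivization.ind with | _ u hu
  induction Q using Projectivization.ind with | _ v hv
  induction R using Projectivization.ind with | _ w hw
  have h := cyclicDet_mulVec g.1 u v w
  rw [g.2, one_pow, one_mul] at h
  rw [isSquareTriple_mk, ← h]
  exact isSquareTriple_mk _ _ _

lemma isSquareTriple_embedPt (x y z : F) :
    IsSquareTriple (embedPt F x) (embedPt F y) (embedPt F z) ↔
      IsSquare ((x - y) * (y - z) * (z - x)) := by
  simp [embedPt, isSquareTriple_mk, cyclicDet, det_fin_two]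

lemma isSquareTriple_inftyPt_zero_embedPt (x : F) :
    IsSquareTriple (inftyPt F) (embedPt F 0) (embedPt F x) ↔ IsSquare x := by
  simp [inftyPt, embedPt, isSquareTriple_mk, cyclicDet, det_fin_two]

end ProjectiveLine

section Design

variable {F : Type} [Field F] {k : ℕ}

lemma exists_subset_mapSL_image_of_gives3Design (h : gives3Design F k)
    {T : Finset (Projectivization F (Fin 2 → F))} (hT : T.card = 3) :
    ∃ g, (T : Set (Projectivization F (Fin 2 → F))) ⊆ mapSL g '' starterB F k := by
  obtain ⟨lam, lam_pos, hlam⟩ := h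
  obtain ⟨_, ⟨g, rfl⟩, hTg⟩ := Set.nonempty_of_ncard_ne_zero (hlam T hT ▸ lam_pos.ne')
  exact ⟨g, hTg⟩

theorem isSquareTriple_of_gives3Design (h : gives3Design F k)
    (hB : ∀ P ∈ starterB F k, ∀ Q ∈ starterB F k, ∀ R ∈ starterB F k, IsSquareTriple P Q R)
    (P Q R : Projectivization F (Fin 2 → F)) : IsSquareTriple P Q R := by
  classical
  by_contra hPQR
  obtain ⟨g, hg⟩ := exists_subset_mapSL_image_of_gives3Design h
    (card_eq_three_of_not_isSquareTriple hPQR)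
  obtain ⟨P', hP', rfl⟩ := hg (by simp : P ∈ _)
  obtain ⟨Q', hQ', rfl⟩ := hg (by simp : Q ∈ _)
  obtain ⟨R', hR', rfl⟩ := hg (by simp : R ∈ _)
  exact hPQR ((isSquareTriple_mapSL g P' Q' R').2 (hB P' hP' Q' hQ' R' hR'))

end Design

section FiniteField

variable {F : Type*} [Field F] [Fintype F] {q : ℕ}

lemma exists_ringHom_eq_pow_of_dvd_card (hq : q ∣ Fintype.card F) :
    ∃ φ : F →+* F, ∀ x, φ x = x ^ q := by
  obtain ⟨p, _⟩ := CharP.exists F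
  obtain ⟨m, hp, hcard⟩ := FiniteField.card F p
  obtain ⟨j, -, rfl⟩ := (Nat.dvd_prime_pow hp).1 (hcard ▸ hq)
  have : Fact p.Prime := ⟨hp⟩
  exact ⟨iterateFrobenius F p j, iterateFrobenius_def p j⟩

lemma isSquare_of_pow_eq_self (hcard : Fintype.card F = q ^ 2) {x : F} (hx : x ^ q = x) :
    IsSquare x := by
  by_cases hchar : ringChar F = 2
  · exact FiniteField.isSquare_of_char_two hchar x
  rcases eq_or_ne x 0 with rfl | hx0
  · exact IsSquare.zero
  have hq : Odd q := by
    have := FiniteField.odd_card_of_char_ne_two hchar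
    rw [← Nat.odd_iff, hcard] at this
    exact (Nat.odd_pow_iff two_ne_zero).1 this
  obtain ⟨m, rfl⟩ := hq
  have hpow : x ^ (2 * m) = 1 := mul_right_cancel₀ hx0 (by rw [← pow_succ, hx, one_mul])
  have hhalf : (2 * m + 1) ^ 2 / 2 = 2 * m * (m + 1) := by
    rw [show (2 * m + 1) ^ 2 = 2 * (2 * m * (m + 1)) + 1 by ring]
    omega
  rw [FiniteField.isSquare_iff hchar hx0, hcard, hhalf, pow_mul, hpow, one_pow]

lemma exists_not_isSquare_of_odd_card (h : Odd (Fintype.card F)) : ∃ x : F, ¬ IsSquare x :=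
  FiniteField.exists_nonsquare fun hchar =>
    Nat.not_even_iff_odd.2 h (Nat.even_iff.2 (FiniteField.even_card_of_char_two hchar))

end FiniteField

lemma isSquareTriple_of_mem_starterB {F : Type} [Field F] [Fintype F] {q k : ℕ}
    (hcard : Fintype.card F = q ^ 2) (hk : k ∣ q - 1) {P Q R : Projectivization F (Fin 2 → F)}
    (hP : P ∈ starterB F k) (hQ : Q ∈ starterB F k) (hR : R ∈ starterB F k) :
    IsSquareTriple P Q R := by
  obtain ⟨x, hx, rfl⟩ := hP
  obtain ⟨y, hy, rfl⟩ := hQ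
  obtain ⟨z, hz, rfl⟩ := hR
  have hq : q ≠ 0 := by
    rintro rfl
    simp at hcard
  obtain ⟨φ, hφ⟩ := exists_ringHom_eq_pow_of_dvd_card (hcard ▸ dvd_pow_self q two_ne_zero)
  have map_root {t : F} (ht : t ^ k = 1) : φ t = t := by
    obtain ⟨c, hc⟩ := hk
    rw [hφ, ← pow_sub_one_mul hq, hc, pow_mul, ht, one_pow, one_mul]
  rw [isSquareTriple_embedPt]
  apply isSquare_of_pow_eq_self hcard
  rw [← hφ]
  simp only [map_mul, map_sub, map_root hx, map_root hy, map_root hz]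

theorem stmt_10_general (F : Type) [Field F] [Fintype F] (q k : ℕ)
    (hcard : Fintype.card F = q ^ 2) (hq : Odd q) (hk : k ∣ q - 1) : ¬ gives3Design F k := by
  intro h
  obtain ⟨x, hx⟩ := exists_not_isSquare_of_odd_card (F := F) (hcard ▸ hq.pow)
  exact hx ((isSquareTriple_inftyPt_zero_embedPt x).1
    (isSquareTriple_of_gives3Design h
      (fun _ hP _ hQ _ hR => isSquareTriple_of_mem_starterB hcard hk hP hQ hR) _ _ _))

/-- Proposition 3.5: if `q` is an odd prime power, `n` is even and positive, and
`k ∣ q - 1` with `3 < k < q - 1` (and `(q^n - 1)/k` even), then `(q^n, k)` does not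
give a 3-design (here `F'` is the field of order `q^n`). -/
theorem stmt_10 (F' : Type) [Field F'] [Fintype F'] [DecidableEq F']
    (q k n : ℕ) (hq' : Fintype.card F' = q ^ n)
    (hqpp : IsPrimePow q) (hqodd : Odd q)
    (hn : Even n) (hn0 : 0 < n)
    (hkdvd : k ∣ q - 1) (hk3 : 3 < k) (hkq : k < q - 1)
    (he : Even ((q ^ n - 1) / k)) :
    ¬ gives3Design F' k := by
  obtain ⟨m, rfl⟩ := hn
  exact stmt_10_general F' (q ^ m) k (by rw [hq', ← pow_mul, mul_two]) hqodd.pow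
    (hkdvd.trans (Nat.sub_one_dvd_pow_sub_one q m))
end
end
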